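/- The 4-form Θ12 = θ1i∧θ2i + θ1j∧θ2j + θ1k∧θ2k is primitive with respect to the symplectic form θs: Θ12∧θs = 0. -/

import Mathlib

/-!
Expanding `Θ12` and sorting the factors, everything collapses to
`Θ12 = 3 * (- dy1∧dx2∧dx3∧dx4 + dy2∧dx1∧dx3∧dx4 - dy3∧dx1∧dx2∧dx4 + dy4∧dx1∧dx2∧dx3)`,
so each monomial is `dy_a` times the three `dx_b` with `b ≠ a` (`Theta12_eq`). Wedging such a
monomial with `dy_c∧dx_c` repeats `dy_a` if `c = a` and repeats `dx_c` if `c ≠ a`, so every term of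
`Θ12∧θs` vanishes.

The generators are kept in increasing order of index (`dx` before `dy`) by the sign rules
`e8_swap`, `e8_swap_assoc`, `e8_sq` and `e8_sq_assoc`, used as rewriting rules by `simp`.
-/

noncomputable section

open ExteriorAlgebra

/-- Basis 1-forms of the dual of `ℝ^8`, modelled as generators of the exterior algebra of an
8-dimensional real vector space. -/
def e8 (i : Fin 8) : ExteriorAlgebra ℝ (Fin 8 → ℝ) :=
  ExteriorAlgebra.ι ℝ (Pi.single i 1)

def dx1 : ExteriorAlgebra ℝ (Fin 8 → ℝ) := e8 0
def dx2 : ExteriorAlgebra ℝ (Fin 8 → ℝ) := e8 1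
def dx3 : ExteriorAlgebra ℝ (Fin 8 → ℝ) := e8 2
def dx4 : ExteriorAlgebra ℝ (Fin 8 → ℝ) := e8 3
def dy1 : ExteriorAlgebra ℝ (Fin 8 → ℝ) := e8 4
def dy2 : ExteriorAlgebra ℝ (Fin 8 → ℝ) := e8 5
def dy3 : ExteriorAlgebra ℝ (Fin 8 → ℝ) := e8 6
def dy4 : ExteriorAlgebra ℝ (Fin 8 → ℝ) := e8 7

def θ0i : ExteriorAlgebra ℝ (Fin 8 → ℝ) := dy1 * dy2 - dy3 * dy4
def θ0j : ExteriorAlgebra ℝ (Fin 8 → ℝ) := dy1 * dy3 + dy2 * dy4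
def θ0k : ExteriorAlgebra ℝ (Fin 8 → ℝ) := dy1 * dy4 - dy2 * dy3
def θ1i : ExteriorAlgebra ℝ (Fin 8 → ℝ) := dy1 * dx2 - dy2 * dx1 + dy4 * dx3 - dy3 * dx4
def θ1j : ExteriorAlgebra ℝ (Fin 8 → ℝ) := dy1 * dx3 + dy2 * dx4 - dy3 * dx1 - dy4 * dx2
def θ1k : ExteriorAlgebra ℝ (Fin 8 → ℝ) := dy1 * dx4 - dy4 * dx1 + dy3 * dx2 - dy2 * dx3
def θ2i : ExteriorAlgebra ℝ (Fin 8 → ℝ) := dx1 * dx2 - dx3 * dx4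
def θ2j : ExteriorAlgebra ℝ (Fin 8 → ℝ) := dx1 * dx3 + dx2 * dx4
def θ2k : ExteriorAlgebra ℝ (Fin 8 → ℝ) := dx1 * dx4 - dx2 * dx3
def θs : ExteriorAlgebra ℝ (Fin 8 → ℝ) := -(dy1 * dx1 + dy2 * dx2 + dy3 * dx3 + dy4 * dx4)

theorem e8_sq (i : Fin 8) : e8 i * e8 i = 0 :=
  ExteriorAlgebra.ι_sq_zero _

theorem e8_sq_assoc (i : Fin 8) (z : ExteriorAlgebra ℝ (Fin 8 → ℝ)) :
    e8 i * (e8 i * z) = 0 := by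
  rw [← mul_assoc, e8_sq, zero_mul]

/-- Anticommutation of the generators. Requiring `j < i` orients the identity, so
that rewriting with it terminates. -/
theorem e8_swap {i j : Fin 8} (_h : j < i) : e8 i * e8 j = -(e8 j * e8 i) :=
  eq_neg_of_add_eq_zero_left (ExteriorAlgebra.ι_add_mul_swap _ _)

theorem e8_swap_assoc {i j : Fin 8} (h : j < i) (z : ExteriorAlgebra ℝ (Fin 8 → ℝ)) :
    e8 i * (e8 j * z) = -(e8 j * (e8 i * z)) := by
  rw [← mul_assoc, e8_swap h, neg_mul, mul_assoc]

theorem Theta12_eq :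
    θ1i * θ2i + θ1j * θ2j + θ1k * θ2k =
      (3 : ℝ) • (-(dy1 * dx2 * dx3 * dx4) + dy2 * dx1 * dx3 * dx4
        - dy3 * dx1 * dx2 * dx4 + dy4 * dx1 * dx2 * dx3) := by
  simp [θ1i, θ1j, θ1k, θ2i, θ2j, θ2k, dx1, dx2, dx3, dx4, dy1, dy2, dy3, dy4, mul_add, add_mul,
    mul_sub, mul_assoc, e8_sq_assoc, e8_swap, e8_swap_assoc]
  module

theorem Theta12_primitive :
    (θ1i * θ2i + θ1j * θ2j + θ1k * θ2k) * θs = 0 := by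
  rw [Theta12_eq]
  simp [θs, dx1, dx2, dx3, dx4, dy1, dy2, dy3, dy4, mul_add, add_mul, mul_assoc,
    e8_sq, e8_sq_assoc, e8_swap, e8_swap_assoc]

end
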